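/- arXiv:1711.11084 — 6 statements merged into one kernel-verified Lean document; each statement's English description precedes it below -/
import Mathlib

section
/- Let R be a commutative ring, let A be an m×m matrix over R whose main diagonal sums to D_A and whose antidiagonal (entries A(i, m−1−i)) sums to D_A', and let B be an n×n matrix over R whose main diagonal sums to D_B and whose antidiagonal sums to D_B'. Then for any k ≥ 1 the aggregated compound C_A = n^k·(A ⊗ E_n) + (E_m ⊗ B) has main-diagonal sum n^(k+1)·D_A + m·D_B and antidiagonal sum n^(k+1)·D_A' + m·D_B'. In particular, if A and B are magic (both diagonal sums equal to the common line sums S_A and S_B), then both diagonals of C_A sum to the compound line sum n^(k+1)·S_A + m·S_B. -/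
open Kronecker

/-- The aggregated compound `C_A = n^k • (A ⊗ E_n) + (E_m ⊗ B)` has
main-diagonal sum `n^(k+1)·D_A + m·D_B` and antidiagonal sum
`n^(k+1)·D_A' + m·D_B'`. In particular, if `A` and `B` are magic (both diagonal
sums equal the line sums `S_A`, `S_B`), then both diagonals of `C_A` sum to the
compound line sum `n^(k+1)·S_A + m·S_B`. -/
theorem aggregated_compound_diagonal_sums
    {R : Type*} [CommRing R] {m n k : ℕ} (hk : 1 ≤ k)
    (A : Matrix (Fin m) (Fin m) R) (B : Matrix (Fin n) (Fin n) R)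
    (DA DA' DB DB' : R)
    (hADiag : ∑ i, A i i = DA) (hAAnti : ∑ i, A i i.rev = DA')
    (hBDiag : ∑ p, B p p = DB) (hBAnti : ∑ p, B p p.rev = DB')
    (C : Matrix (Fin m × Fin n) (Fin m × Fin n) R)
    (hC : C = (n : R) ^ k • (A ⊗ₖ (Matrix.of fun _ _ => (1 : R)))
            + ((Matrix.of fun _ _ => (1 : R)) ⊗ₖ B)) :
    (∑ x : Fin m × Fin n, C x x = (n : R) ^ (k + 1) * DA + (m : R) * DB) ∧
    (∑ x : Fin m × Fin n, C x (x.1.rev, x.2.rev)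
        = (n : R) ^ (k + 1) * DA' + (m : R) * DB') ∧
    (∀ SA SB : R, DA = SA → DA' = SA → DB = SB → DB' = SB →
      (∑ x : Fin m × Fin n, C x x = (n : R) ^ (k + 1) * SA + (m : R) * SB) ∧
      (∑ x : Fin m × Fin n, C x (x.1.rev, x.2.rev)
          = (n : R) ^ (k + 1) * SA + (m : R) * SB)) := by
  have key : ∀ (f : Fin m → R) (g : Fin n → R),
      ∑ x : Fin m × Fin n, ((n : R) ^ k * f x.1 + g x.2)
        = (n : R) ^ (k + 1) * ∑ i, f i + (m : R) * ∑ p, g p := by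
    intro f g
    rw [Fintype.sum_prod_type]
    simp only [Finset.sum_add_distrib, Finset.sum_const, Finset.card_univ, Fintype.card_fin,
      nsmul_eq_mul, ← Finset.mul_sum]
    ring
  have h1 : ∑ x : Fin m × Fin n, C x x = (n : R) ^ (k + 1) * DA + (m : R) * DB := by
    rw [← hADiag, ← hBDiag, ← key (fun i => A i i) (fun p => B p p), hC]
    simp [Matrix.kroneckerMap_apply]
  have h2 : ∑ x : Fin m × Fin n, C x (x.1.rev, x.2.rev)
      = (n : R) ^ (k + 1) * DA' + (m : R) * DB' := by
    rw [← hAAnti, ← hBAnti, ← key (fun i => A i i.rev) (fun p => B p p.rev), hC]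
    simp [Matrix.kroneckerMap_apply]
  refine ⟨h1, h2, ?_⟩
  intro SA SB e1 e2 e3 e4
  refine ⟨?_, ?_⟩
  · rw [h1, e1, e3]
  · rw [h2, e2, e4]
end

section
/- Let F be a commutative ring, let A be an m×m matrix over F, let B be any n×n matrix over F, and let k ≥ 1. If v is a vector of length m with A·v = ν·v and ∑_i v(i) = 0, then the aggregated compound C_A = n^k·(A ⊗ E_n) + (E_m ⊗ B) satisfies C_A·(v ⊗ e_n) = (n^(k+1)·ν)·(v ⊗ e_n). That is, v ⊗ e_n is an eigenvector of the aggregated compound with eigenvalue n^(k+1)·ν. -/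
open Kronecker

/-- If `A·v = ν·v` with the entries of `v` summing to zero, then
`v ⊗ e_n` is an eigenvector of the aggregated compound
`C_A = n^k • (A ⊗ E_n) + (E_m ⊗ B)` with eigenvalue `n^(k+1)·ν`. -/
theorem aggregated_compound_eigenvector_from_A
    {F : Type*} [CommRing F] {m n k : ℕ} (hk : 1 ≤ k)
    (A : Matrix (Fin m) (Fin m) F) (B : Matrix (Fin n) (Fin n) F)
    (v : Fin m → F) (ν : F)
    (hv : A.mulVec v = ν • v) (hsum : ∑ i, v i = 0)
    (C : Matrix (Fin m × Fin n) (Fin m × Fin n) F)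
    (hC : C = (n : F) ^ k • (A ⊗ₖ (Matrix.of fun _ _ => (1 : F)))
            + ((Matrix.of fun _ _ => (1 : F)) ⊗ₖ B)) :
    C.mulVec (fun ip : Fin m × Fin n => v ip.1)
      = ((n : F) ^ (k + 1) * ν) • fun ip : Fin m × Fin n => v ip.1 := by
  subst hC
  funext ip
  obtain ⟨i, p⟩ := ip
  have h1 : ∑ j, A i j * v j = ν * v i := by
    have := congrFun hv i
    simpa [Matrix.mulVec, dotProduct] using this
  have h2 : ∑ j, ∑ q, B p q * v j = 0 := by
    rw [Finset.sum_comm]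
    simp [← Finset.mul_sum, hsum]
  have h3 : ∑ j, ∑ _q : Fin n, (n : F) ^ k * A i j * v j = (n : F) ^ (k + 1) * ν * v i := by
    rw [Finset.sum_comm]
    simp only [mul_assoc, ← Finset.mul_sum, h1]
    simp
    ring
  simp only [Matrix.mulVec, dotProduct, Fintype.sum_prod_type, Matrix.add_apply,
    Matrix.smul_apply, Matrix.kroneckerMap_apply, Matrix.of_apply, mul_one, one_mul,
    smul_eq_mul, Pi.smul_apply, add_mul, Finset.sum_add_distrib]
  rw [h2, h3, add_zero]
end

section
/- Let F be a commutative ring, A an m×m matrix, B an n×n matrix over F, k ≥ 1, and let C_D = (A ⊗ E_n) + m^k·(E_m ⊗ B) be the dispersed compound. (i) If u is a vector of length n with B·u = μ·u and ∑_p u(p) = 0, then C_D·(e_m ⊗ u) = (m^(k+1)·μ)·(e_m ⊗ u). (ii) If v is a vector of length m with A·v = ν·v and ∑_i v(i) = 0, then C_D·(v ⊗ e_n) = (n·ν)·(v ⊗ e_n). Thus the non-dominant eigenvalues of the dispersed compound arising from B and A are m^(k+1)·μ and n·ν respectively. -/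
open Kronecker

/-- Eigenvectors of the dispersed compound
`C_D = (A ⊗ E_n) + m^k • (E_m ⊗ B)`:
(i) if `B·u = μ·u` with `∑ u = 0` then `e_m ⊗ u` is an eigenvector with
eigenvalue `m^(k+1)·μ`; (ii) if `A·v = ν·v` with `∑ v = 0` then `v ⊗ e_n` is an
eigenvector with eigenvalue `n·ν`. -/
theorem dispersed_compound_eigenvectors
    {F : Type*} [CommRing F] {m n k : ℕ} (hk : 1 ≤ k)
    (A : Matrix (Fin m) (Fin m) F) (B : Matrix (Fin n) (Fin n) F)
    (C : Matrix (Fin m × Fin n) (Fin m × Fin n) F)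
    (hC : C = (A ⊗ₖ (Matrix.of fun _ _ => (1 : F)))
            + (m : F) ^ k • ((Matrix.of fun _ _ => (1 : F)) ⊗ₖ B)) :
    (∀ (u : Fin n → F) (μ : F), B.mulVec u = μ • u → ∑ p, u p = 0 →
      C.mulVec (fun ip : Fin m × Fin n => u ip.2)
        = ((m : F) ^ (k + 1) * μ) • fun ip : Fin m × Fin n => u ip.2) ∧
    (∀ (v : Fin m → F) (ν : F), A.mulVec v = ν • v → ∑ i, v i = 0 →
      C.mulVec (fun ip : Fin m × Fin n => v ip.1)
        = ((n : F) * ν) • fun ip : Fin m × Fin n => v ip.1) := by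
  subst hC
  constructor
  · intro u μ hu hs
    funext ⟨i, p⟩
    have h := congrFun hu p
    simp only [Matrix.mulVec, dotProduct, Pi.smul_apply, smul_eq_mul] at h
    simp only [Matrix.mulVec, dotProduct, Fintype.sum_prod_type, Matrix.add_apply,
      Matrix.smul_apply, Matrix.kroneckerMap_apply, Matrix.of_apply, Pi.smul_apply,
      smul_eq_mul, mul_one, one_mul, add_mul, Finset.sum_add_distrib, mul_assoc,
      ← Finset.mul_sum, hs, h, mul_zero, Finset.sum_const_zero, zero_add,
      Finset.sum_const, Finset.card_univ, Fintype.card_fin, nsmul_eq_mul]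
    ring
  · intro v ν hv hs
    funext ⟨i, p⟩
    have h := congrFun hv i
    simp only [Matrix.mulVec, dotProduct, Pi.smul_apply, smul_eq_mul] at h
    simp only [Matrix.mulVec, dotProduct, Fintype.sum_prod_type_right, Matrix.add_apply,
      Matrix.smul_apply, Matrix.kroneckerMap_apply, Matrix.of_apply, Pi.smul_apply,
      smul_eq_mul, mul_one, one_mul, add_mul, Finset.sum_add_distrib, mul_assoc,
      ← Finset.mul_sum, hs, h, mul_zero, Finset.sum_const_zero, add_zero,
      Finset.sum_const, Finset.card_univ, Fintype.card_fin, nsmul_eq_mul]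
    ring
end

section
/- Let A be any m×m real matrix, let B be an n×n real matrix all of whose column sums equal S_B, and let k ≥ 1. If u is a vector of length n with (Bᵀ·B)·u = τ·u and ∑_p u(p) = 0, then the Gramian of the aggregated compound C_A = n^k·(A ⊗ E_n) + (E_m ⊗ B) satisfies (C_Aᵀ·C_A)·(e_m ⊗ u) = (m²·τ)·(e_m ⊗ u). Hence if η is a non-dominant singular value of B (with right singular vector orthogonal to e_n), then m·η is a singular value of C_A. -/
open Kronecker Matrix

/-- The compound acts on `e_m ⊗ w` as `m • (e_m ⊗ B w)` when `∑ w = 0`. -/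
theorem compound_mulVec_aux {m n : ℕ} (c : ℝ)
    (A : Matrix (Fin m) (Fin m) ℝ) (B : Matrix (Fin n) (Fin n) ℝ)
    (w : Fin n → ℝ) (hw : ∑ p, w p = 0)
    (D : Matrix (Fin m × Fin n) (Fin m × Fin n) ℝ)
    (hD : ∀ i p j q, D (i, p) (j, q) = c * A i j + B p q) :
    D.mulVec (fun ip : Fin m × Fin n => w ip.2)
      = fun ip : Fin m × Fin n => ((m : ℝ) • B.mulVec w) ip.2 := by
  funext ⟨i, p⟩
  simp only [Matrix.mulVec, dotProduct, Fintype.sum_prod_type, hD, add_mul,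
    Finset.sum_add_distrib, ← Finset.mul_sum, hw, mul_zero, Finset.sum_const_zero, zero_add,
    Finset.sum_const, Finset.card_univ, Fintype.card_fin, nsmul_eq_mul, Pi.smul_apply,
    smul_eq_mul]

/-- If all column sums of `B` equal `S_B`, and `u` satisfies
`(Bᵀ·B)·u = τ·u` with `∑ u = 0`, then the Gramian of the aggregated compound
`C_A = n^k • (A ⊗ E_n) + (E_m ⊗ B)` satisfies
`(C_Aᵀ·C_A)·(e_m ⊗ u) = m²·τ·(e_m ⊗ u)`. -/
theorem aggregated_compound_gramian_from_B
    {m n k : ℕ} (hk : 1 ≤ k)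
    (A : Matrix (Fin m) (Fin m) ℝ) (B : Matrix (Fin n) (Fin n) ℝ) (SB : ℝ)
    (hBcol : ∀ q, ∑ p, B p q = SB)
    (u : Fin n → ℝ) (τ : ℝ)
    (hu : (Bᵀ * B).mulVec u = τ • u) (hsum : ∑ p, u p = 0)
    (C : Matrix (Fin m × Fin n) (Fin m × Fin n) ℝ)
    (hC : C = (n : ℝ) ^ k • (A ⊗ₖ (Matrix.of fun _ _ => (1 : ℝ)))
            + ((Matrix.of fun _ _ => (1 : ℝ)) ⊗ₖ B)) :
    (Cᵀ * C).mulVec (fun ip : Fin m × Fin n => u ip.2)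
      = ((m : ℝ) ^ 2 * τ) • fun ip : Fin m × Fin n => u ip.2 := by
  have h1 := compound_mulVec_aux ((n : ℝ) ^ k) A B u hsum C (by
    intro i p j q; simp [hC])
  have hs : ∑ p, ((m : ℝ) • B.mulVec u) p = 0 := by
    simp only [Pi.smul_apply, smul_eq_mul, ← Finset.mul_sum, Matrix.mulVec, dotProduct]
    rw [Finset.sum_comm]
    simp only [← Finset.sum_mul, hBcol, ← Finset.mul_sum, hsum, mul_zero]
  have h2 := compound_mulVec_aux ((n : ℝ) ^ k) Aᵀ Bᵀ _ hs Cᵀ (by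
    intro i p j q; simp [hC])
  rw [← Matrix.mulVec_mulVec, h1, h2, Matrix.mulVec_smul, Matrix.mulVec_mulVec, hu]
  funext ip
  simp only [Pi.smul_apply, smul_eq_mul]
  ring
end

section
/- Let A be an m×m real matrix all of whose column sums equal S_A, let B be any n×n real matrix, and let k ≥ 1. If v is a vector of length m with (Aᵀ·A)·v = ρ·v and ∑_i v(i) = 0, then the Gramian of the aggregated compound C_A = n^k·(A ⊗ E_n) + (E_m ⊗ B) satisfies (C_Aᵀ·C_A)·(v ⊗ e_n) = (n^(2k+2)·ρ)·(v ⊗ e_n). Hence if ξ is a non-dominant singular value of A (with right singular vector orthogonal to e_m), then n^(k+1)·ξ is a singular value of C_A. -/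
open Kronecker Matrix

/-- If all column sums of `A` equal `S_A`, and `v` satisfies
`(Aᵀ·A)·v = ρ·v` with `∑ v = 0`, then the Gramian of the aggregated compound
`C_A = n^k • (A ⊗ E_n) + (E_m ⊗ B)` satisfies
`(C_Aᵀ·C_A)·(v ⊗ e_n) = n^(2k+2)·ρ·(v ⊗ e_n)`. -/
theorem aggregated_compound_gramian_from_A
    {m n k : ℕ} (hk : 1 ≤ k)
    (A : Matrix (Fin m) (Fin m) ℝ) (B : Matrix (Fin n) (Fin n) ℝ) (SA : ℝ)
    (hAcol : ∀ j, ∑ i, A i j = SA)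
    (v : Fin m → ℝ) (ρ : ℝ)
    (hv : (Aᵀ * A).mulVec v = ρ • v) (hsum : ∑ i, v i = 0)
    (C : Matrix (Fin m × Fin n) (Fin m × Fin n) ℝ)
    (hC : C = (n : ℝ) ^ k • (A ⊗ₖ (Matrix.of fun _ _ => (1 : ℝ)))
            + ((Matrix.of fun _ _ => (1 : ℝ)) ⊗ₖ B)) :
    (Cᵀ * C).mulVec (fun ip : Fin m × Fin n => v ip.1)
      = ((n : ℝ) ^ (2 * k + 2) * ρ) • fun ip : Fin m × Fin n => v ip.1 := by
  have h1 : C.mulVec (fun ip : Fin m × Fin n => v ip.1)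
      = fun ip => (n : ℝ) ^ (k + 1) * (A.mulVec v) ip.1 := by
    ext ⟨i, p⟩
    have hz : ∑ j : Fin m, ∑ q : Fin n, B p q * v j = 0 := by
      simp_rw [← Finset.sum_mul]
      rw [← Finset.mul_sum, hsum, mul_zero]
    simp only [hC, Matrix.mulVec, dotProduct, Fintype.sum_prod_type, Matrix.add_apply,
      Matrix.smul_apply, Matrix.kroneckerMap_apply, Matrix.of_apply, smul_eq_mul, mul_one,
      one_mul, add_mul, Finset.sum_add_distrib, hz, add_zero, Finset.sum_const,
      Finset.card_univ, Fintype.card_fin, nsmul_eq_mul, Finset.mul_sum]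
    refine Finset.sum_congr rfl fun j _ => ?_
    ring
  have h2 : ∑ i, (A.mulVec v) i = 0 := by
    simp only [Matrix.mulVec, dotProduct]
    rw [Finset.sum_comm]
    simp_rw [← Finset.sum_mul, hAcol]
    rw [← Finset.mul_sum, hsum, mul_zero]
  rw [← Matrix.mulVec_mulVec, h1]
  rw [← Matrix.mulVec_mulVec] at hv
  ext ⟨j, q⟩
  have hj := congrFun hv j
  generalize A.mulVec v = w at hj h2
  simp only [Matrix.mulVec, dotProduct, Matrix.transpose_apply, Pi.smul_apply,
    smul_eq_mul] at hj
  have hz : ∑ i : Fin m, ∑ p : Fin n, B p q * ((n : ℝ) ^ (k + 1) * w i) = 0 := by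
    simp_rw [← Finset.sum_mul]
    rw [← Finset.mul_sum, ← Finset.mul_sum, h2, mul_zero, mul_zero]
  simp only [hC, Matrix.mulVec, dotProduct, Fintype.sum_prod_type, Matrix.transpose_apply,
    Matrix.add_apply, Matrix.smul_apply, Matrix.kroneckerMap_apply, Matrix.of_apply,
    smul_eq_mul, mul_one, one_mul, add_mul, Finset.sum_add_distrib, hz, add_zero,
    Finset.sum_const, Finset.card_univ, Fintype.card_fin, nsmul_eq_mul, Pi.smul_apply]
  rw [mul_assoc, ← hj, Finset.mul_sum]
  refine Finset.sum_congr rfl fun i _ => ?_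
  ring
end

section
/- Let F be a commutative ring and let A (m×m) and B (n×n) be matrices over F, with the GAPDA compound defined by C_G = (A ⊗ E_n) + (E_m ⊗ B). Then: (i) if every row and column sum of A equals S_A and every row and column sum of B equals S_B, then C_G·e_{mn} = (n·S_A + m·S_B)·e_{mn}, and indeed every row and column sum of C_G equals n·S_A + m·S_B; (ii) if B·u = μ·u with ∑_p u(p) = 0, then C_G·(e_m ⊗ u) = (m·μ)·(e_m ⊗ u); (iii) if A·v = ν·v with ∑_i v(i) = 0, then C_G·(v ⊗ e_n) = (n·ν)·(v ⊗ e_n). -/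
open Kronecker

/-- Properties of the GAPDA compound `C_G = (A ⊗ E_n) + (E_m ⊗ B)`:
(i) if `A` and `B` are doubly affine with line sums `S_A`, `S_B`, then
`C_G·e_{mn} = (n·S_A + m·S_B)·e_{mn}` and every row and column sum of `C_G`
equals `n·S_A + m·S_B`; (ii) if `B·u = μ·u` with `∑ u = 0`, then
`C_G·(e_m ⊗ u) = m·μ·(e_m ⊗ u)`; (iii) if `A·v = ν·v` with `∑ v = 0`, then
`C_G·(v ⊗ e_n) = n·ν·(v ⊗ e_n)`. -/
theorem gapda_compound_properties
    {F : Type*} [CommRing F] {m n : ℕ}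
    (A : Matrix (Fin m) (Fin m) F) (B : Matrix (Fin n) (Fin n) F)
    (C : Matrix (Fin m × Fin n) (Fin m × Fin n) F)
    (hC : C = (A ⊗ₖ ((Matrix.of fun _ _ => (1 : F)) : Matrix (Fin n) (Fin n) F))
            + (((Matrix.of fun _ _ => (1 : F)) : Matrix (Fin m) (Fin m) F) ⊗ₖ B)) :
    (∀ SA SB : F,
      (∀ i, ∑ j, A i j = SA) → (∀ j, ∑ i, A i j = SA) →
      (∀ p, ∑ q, B p q = SB) → (∀ q, ∑ p, B p q = SB) →
      (C.mulVec (fun _ : Fin m × Fin n => (1 : F))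
          = ((n : F) * SA + (m : F) * SB) • fun _ : Fin m × Fin n => (1 : F)) ∧
      (∀ r : Fin m × Fin n,
          ∑ c : Fin m × Fin n, C r c = (n : F) * SA + (m : F) * SB) ∧
      (∀ c : Fin m × Fin n,
          ∑ r : Fin m × Fin n, C r c = (n : F) * SA + (m : F) * SB)) ∧
    (∀ (u : Fin n → F) (μ : F), B.mulVec u = μ • u → ∑ p, u p = 0 →
      C.mulVec (fun ip : Fin m × Fin n => u ip.2)
        = ((m : F) * μ) • fun ip : Fin m × Fin n => u ip.2) ∧
    (∀ (v : Fin m → F) (ν : F), A.mulVec v = ν • v → ∑ i, v i = 0 →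
      C.mulVec (fun ip : Fin m × Fin n => v ip.1)
        = ((n : F) * ν) • fun ip : Fin m × Fin n => v ip.1) := by
  have hE : ∀ r c, C r c = A r.1 c.1 + B r.2 c.2 := by
    intro r c
    rw [hC]
    simp [Matrix.add_apply, Matrix.kroneckerMap_apply]
  have hrow : ∀ SA SB : F, (∀ i, ∑ j, A i j = SA) → (∀ p, ∑ q, B p q = SB) →
      ∀ r : Fin m × Fin n,
        ∑ c : Fin m × Fin n, C r c = (n : F) * SA + (m : F) * SB := by
    intro SA SB hA hB r
    simp only [hE, Fintype.sum_prod_type, Finset.sum_add_distrib, hB, Finset.sum_const,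
      Finset.card_univ, Fintype.card_fin, nsmul_eq_mul, ← Finset.mul_sum, hA]
  refine ⟨?_, ?_, ?_⟩
  · intro SA SB hA hA' hB hB'
    refine ⟨?_, hrow SA SB hA hB, ?_⟩
    · funext r
      simpa [Matrix.mulVec, dotProduct] using hrow SA SB hA hB r
    · intro c
      simp only [hE, Fintype.sum_prod_type, Finset.sum_add_distrib, hB', Finset.sum_const,
        Finset.card_univ, Fintype.card_fin, nsmul_eq_mul, ← Finset.mul_sum, hA']
  · intro u μ hu h0
    funext r
    have h := congrFun hu r.2
    simp only [Matrix.mulVec, dotProduct, Pi.smul_apply, smul_eq_mul] at h ⊢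
    simp only [hE, Fintype.sum_prod_type, add_mul, Finset.sum_add_distrib, ← Finset.mul_sum,
      h0, h, Finset.sum_const, Finset.card_univ, Fintype.card_fin, nsmul_eq_mul, mul_zero]
    ring
  · intro v ν hv h0
    funext r
    have h := congrFun hv r.1
    simp only [Matrix.mulVec, dotProduct, Pi.smul_apply, smul_eq_mul] at h ⊢
    simp only [hE, Fintype.sum_prod_type_right, add_mul, Finset.sum_add_distrib,
      ← Finset.mul_sum,
      h0, h, Finset.sum_const, Finset.card_univ, Fintype.card_fin, nsmul_eq_mul, mul_zero]
    ring
end
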